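/- Let K be a field whose characteristic is a prime p ≥ 7. Then for every matroid N (on any type β), there is no online matroid embedding from the class of all K-representable matroids into N. -/

import Mathlib

open Set

/-- The rank of a set in a matroid: the supremum of the cardinalities of its
independent subsets. -/
noncomputable def mRank {α : Type*} (M : Matroid α) (S : Set α) : ℕ∞ :=
  ⨆ I ∈ {I : Set α | M.Indep I ∧ I ⊆ S}, I.encard

/-- The rank of a set of vectors: the dimension of its linear span. -/
noncomputable def spanRank (K : Type*) [Field K] {W : Type*} [AddCommGroup W] [Module K W]
    (S : Set W) : ℕ :=
  Module.finrank K (Submodule.span K S)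

/-- A matroid is representable over a field `K` if independence coincides with
`K`-linear independence of an assignment of vectors to the elements. -/
def RepOver (K : Type*) [Field K] {α : Type*} (M : Matroid α) : Prop :=
  ∃ (ι : Type) (f : α → ι → K), ∀ I : Set α,
    M.Indep I ↔ I ⊆ M.E ∧ LinearIndependent K (fun x : I => f (x : α))

/-- The `k`-prefix of an ordered matroid on `Fin m`: its restriction to the
first `k` elements, viewed as a matroid on `Fin k`. -/
def prefixMatroid {k m : ℕ} (h : k ≤ m) (M : Matroid (Fin m)) : Matroid (Fin k) :=
  M.comap (Fin.castLE h)

/-- An online matroid morphism (OMM) of the class `P` of ordered matroids into the host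
matroid `N`: a rank-preserving map for each matroid of the class, consistent on prefixes. -/
def OMMof (P : (m : ℕ) → Matroid (Fin m) → Prop) {β : Type*} (N : Matroid β) : Prop :=
  ∃ f : (m : ℕ) → Matroid (Fin m) → (Fin m → β),
    (∀ m (M : Matroid (Fin m)), P m M →
      ∀ S : Set (Fin m), S ⊆ M.E → mRank N (f m M '' S) = mRank M S) ∧
    (∀ k m (hkm : k ≤ m) (M : Matroid (Fin m)), P m M →
      ∀ i : Fin k, f k (prefixMatroid hkm M) i = f m M (Fin.castLE hkm i))

/-- An online matroid embedding (OME): an online matroid morphism all of whose maps are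
injective. -/
def OMEof (P : (m : ℕ) → Matroid (Fin m) → Prop) {β : Type*} (N : Matroid β) : Prop :=
  ∃ f : (m : ℕ) → Matroid (Fin m) → (Fin m → β),
    (∀ m (M : Matroid (Fin m)), P m M → Function.Injective (f m M)) ∧
    (∀ m (M : Matroid (Fin m)), P m M →
      ∀ S : Set (Fin m), S ⊆ M.E → mRank N (f m M '' S) = mRank M S) ∧
    (∀ k m (hkm : k ≤ m) (M : Matroid (Fin m)), P m M →
      ∀ i : Fin k, f k (prefixMatroid hkm M) i = f m M (Fin.castLE hkm i))

lemma mRank_eq_eRk {α : Type*} (M : Matroid α) (S : Set α) : mRank M S = M.eRk S := by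
  unfold mRank
  apply le_antisymm
  · refine iSup₂_le fun I hI => hI.1.encard_le_eRk_of_subset hI.2
  · obtain ⟨I, hI⟩ := M.exists_isBasis' S
    rw [hI.eRk_eq_encard]
    exact le_iSup₂_of_le I ⟨hI.indep, hI.subset⟩ le_rfl

/-- The matroid on `Fin m` represented by a family of vectors. -/
noncomputable def vecMatroid {K : Type*} [Field K] {m : ℕ} (v : Fin m → Fin 3 → K) :
    Matroid (Fin m) :=
  (IndepMatroid.ofFinite (E := univ) (toFinite _) (fun I => LinearIndepOn K v I)
    (linearIndepOn_empty K v) (fun _ _ hJ h => hJ.mono h)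
    (by
      intro I J hI hJ hlt
      by_contra! hcon
      have hsub : v '' J ⊆ Submodule.span K (v '' I) := by
        rintro _ ⟨e, he, rfl⟩
        by_cases heI : e ∈ I
        · exact Submodule.subset_span ⟨e, heI, rfl⟩
        · have h := hcon e he heI
          rw [linearIndepOn_insert heI] at h
          by_contra h2
          exact h ⟨hI, h2⟩
      have h1 := Submodule.rank_mono (Submodule.span_le.2 hsub)
      have h2 := Cardinal.toENat.monotone' h1
      have h3 : J.encard ≤ I.encard := by
        rw [← toENat_rank_span_set hI, ← toENat_rank_span_set hJ]
        exact h2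
      have h4 := ENat.toNat_le_toNat h3 (toFinite I).encard_lt_top.ne
      exact absurd h4 (not_le.2 hlt))
    (fun _ _ => subset_univ _)).matroid

lemma vecMatroid_indep {K : Type*} [Field K] {m : ℕ} (v : Fin m → Fin 3 → K) (I : Set (Fin m)) :
    (vecMatroid v).Indep I ↔ LinearIndepOn K v I := Iff.rfl

lemma vecMatroid_ground {K : Type*} [Field K] {m : ℕ} (v : Fin m → Fin 3 → K) :
    (vecMatroid v).E = univ := rfl

lemma vecMatroid_rep {K : Type*} [Field K] {m : ℕ} (v : Fin m → Fin 3 → K) :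
    RepOver K (vecMatroid v) :=
  ⟨Fin 3, v, fun I => by
    rw [vecMatroid_indep, vecMatroid_ground]
    exact ⟨fun h => ⟨subset_univ _, h⟩, fun h => h.2⟩⟩

lemma indep_encard_le {K : Type*} [Field K] {m : ℕ} (v : Fin m → Fin 3 → K) (I : Set (Fin m))
    (h : LinearIndepOn K v I) : I.encard ≤ 3 := by
  rw [← toENat_rank_span_set h]
  have h1 := Submodule.rank_le (Submodule.span K (v '' I))
  have h2 := Cardinal.toENat.monotone' h1
  simpa using h2

lemma linearIndepOn_range_det {K : Type*} [Field K] {m : ℕ} (v : Fin m → Fin 3 → K)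
    (g : Fin 3 → Fin m) (hg : Function.Injective g) :
    LinearIndepOn K v (range g) ↔ (Matrix.of (fun i => v (g i))).det ≠ 0 := by
  rw [← isUnit_iff_ne_zero, ← Matrix.isUnit_iff_isUnit_det,
    ← Matrix.linearIndependent_rows_iff_isUnit, LinearIndepOn,
    ← linearIndependent_equiv (Equiv.ofInjective g hg)]
  rfl

lemma linearIndepOn_triple {K : Type*} [Field K] {m : ℕ} (v : Fin m → Fin 3 → K)
    (a b c : Fin m) (hab : a ≠ b) (hac : a ≠ c) (hbc : b ≠ c) :
    LinearIndepOn K v {a, b, c} ↔ (Matrix.of ![v a, v b, v c]).det ≠ 0 := by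
  have hg : Function.Injective ![a, b, c] := by
    intro i j
    fin_cases i <;> fin_cases j <;> simp [hab, hac, hbc, hab.symm, hac.symm, hbc.symm]
  have hr : range ![a, b, c] = {a, b, c} := by
    ext x; simp [eq_comm]; tauto
  have := linearIndepOn_range_det v ![a, b, c] hg
  rw [hr] at this
  rw [this]
  have : (Matrix.of fun i => v (![a, b, c] i)) = Matrix.of ![v a, v b, v c] := by
    ext i j; fin_cases i <;> rfl
  rw [this]

/-- Points of the moment curve (conic) with distinct parameters are in general position. -/
lemma moment_indep {K : Type*} [Field K] (t : Fin 6 → K) (ht : Function.Injective t)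
    (I : Set (Fin 6)) :
    LinearIndepOn K (fun i (j : Fin 3) => t i ^ (j : ℕ)) I ↔ I.encard ≤ 3 := by
  refine ⟨indep_encard_le _ I, fun h => ?_⟩
  obtain ⟨J, hIJ, -, hJ⟩ := exists_superset_subset_encard_eq (subset_univ I) h
    (by simp [Set.encard_univ]; norm_num)
  refine LinearIndepOn.mono ?_ hIJ
  obtain ⟨a, b, c, hab, hac, hbc, rfl⟩ := encard_eq_three.1 hJ
  rw [linearIndepOn_triple _ a b c hab hac hbc]
  have h1 := sub_ne_zero.2 (ht.ne hab)
  have h2 := sub_ne_zero.2 (ht.ne hac)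
  have h3 := sub_ne_zero.2 (ht.ne hbc)
  have : (Matrix.of ![fun j : Fin 3 => t a ^ (j : ℕ), fun j : Fin 3 => t b ^ (j : ℕ),
      fun j : Fin 3 => t c ^ (j : ℕ)]).det = -((t a - t b) * (t a - t c) * (t b - t c)) := by
    simp [Matrix.det_fin_three]
    ring
  rw [this]
  exact neg_ne_zero.2 (mul_ne_zero (mul_ne_zero h1 h2) h3)

/-- Parameters on the conic. -/
def par {K : Type*} [Field K] (c : K) : Fin 6 → K := ![0, 5, 1, 4, 2, c]

/-- Six points on the conic followed by the point `(0,1,5)`. -/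
def vecs {K : Type*} [Field K] (c : K) : Fin 7 → Fin 3 → K :=
  Fin.snoc (fun i (j : Fin 3) => par c i ^ (j : ℕ)) ![0, 1, 5]

lemma prefix_indep {K : Type*} [Field K] (c : K) (hc : Function.Injective (par c))
    (I : Set (Fin 6)) :
    (prefixMatroid (show 6 ≤ 7 by norm_num) (vecMatroid (vecs c))).Indep I ↔ I.encard ≤ 3 := by
  rw [← moment_indep (par c) hc I, prefixMatroid, Matroid.comap_indep_iff, vecMatroid_indep]
  have hinj : InjOn (Fin.castLE (show 6 ≤ 7 by norm_num)) I :=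
    (Fin.castLE_injective _).injOn
  rw [and_iff_left hinj]
  have : vecs c ∘ Fin.castLE (show 6 ≤ 7 by norm_num) = fun i (j : Fin 3) => par c i ^ (j : ℕ) := by
    funext i
    have h := Fin.snoc_castSucc (α := fun _ => Fin 3 → K) ![0, 1, 5]
      (fun i (j : Fin 3) => par c i ^ (j : ℕ)) i
    exact h
  rw [← this, LinearIndepOn, ← linearIndependent_equiv (Equiv.Set.imageOfInjOn _ I hinj)]
  rfl

lemma eRk_toNat_submod {β : Type*} (N : Matroid β) (P Q S T : Set β) (hS : S.Finite)
    (hT : T.Finite) (h1 : P ⊆ S) (h2 : P ⊆ T) (h3 : Q ⊆ S ∪ T) :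
    (N.eRk P).toNat + (N.eRk Q).toNat ≤ (N.eRk S).toNat + (N.eRk T).toNat := by
  have fin : ∀ {U : Set β}, U.Finite → N.eRk U ≠ ⊤ := fun {U} hU =>
    ((N.eRk_le_encard U).trans_lt hU.encard_lt_top).ne
  have hP := fin (hS.subset h1)
  have hQ := fin ((hS.union hT).subset h3)
  have key : N.eRk P + N.eRk Q ≤ N.eRk S + N.eRk T :=
    (add_le_add (N.eRk_mono (subset_inter h1 h2)) (N.eRk_mono h3)).trans
      (N.eRk_inter_add_eRk_union_le S T)
  rw [← ENat.natCast_toNat hP, ← ENat.natCast_toNat hQ, ← ENat.natCast_toNat (fin hS),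
    ← ENat.natCast_toNat (fin hT)] at key
  exact_mod_cast key

lemma host_contra {β : Type*} (N : Matroid β) (A B C D E F X Y : β)
    (hAB : N.eRk {A, B} = 2) (hABX : N.eRk {A, B, X} = 2) (hABY : N.eRk {A, B, Y} = 2)
    (hCD : N.eRk {C, D} = 2) (hCDX : N.eRk {C, D, X} = 2) (hCDY : N.eRk {C, D, Y} = 2)
    (hABC : N.eRk {A, B, C} = 3) (hX : N.eRk {X} = 1)
    (hEFX : N.eRk {E, F, X} = 2) (hEFY : N.eRk {E, F, Y} = 3) : False := by
  have s1 := eRk_toNat_submod N {A, B} {A, B, X, Y} {A, B, X} {A, B, Y} (toFinite _) (toFinite _)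
    (by grind) (by grind) (by grind)
  have s2 := eRk_toNat_submod N {C, D} {C, D, X, Y} {C, D, X} {C, D, Y} (toFinite _) (toFinite _)
    (by grind) (by grind) (by grind)
  have s3 := eRk_toNat_submod N {X, Y} {A, B, C} {A, B, X, Y} {C, D, X, Y} (toFinite _)
    (toFinite _) (by grind) (by grind) (by grind)
  have s4 := eRk_toNat_submod N {X} {E, F, Y} {E, F, X} {X, Y} (toFinite _)
    (toFinite _) (by grind) (by grind) (by grind)
  rw [hAB, hABX, hABY] at s1
  rw [hCD, hCDX, hCDY] at s2
  rw [hABC] at s3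
  rw [hX, hEFX, hEFY] at s4
  simp at s1 s2 s3 s4
  omega

/-- A dependent triple containing an independent pair has rank two. -/
lemma eRk_triple_dep {α : Type*} (M : Matroid α) (a b c : α) (hab : a ≠ b)
    (h2 : M.Indep {a, b}) (h3 : ¬ M.Indep {a, b, c}) : M.eRk {a, b, c} = 2 := by
  apply le_antisymm
  · rw [Matroid.eRk_le_iff]
    intro I hI hind
    have hss : I ⊂ {a, b, c} := hI.ssubset_of_ne (by rintro rfl; exact h3 hind)
    have hlt := ((toFinite {a, b, c}).subset hI).encard_lt_encard hss
    have hle : ({a, b, c} : Set α).encard ≤ 3 := by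
      calc ({a, b, c} : Set α).encard ≤ ({b, c} : Set α).encard + 1 := encard_insert_le _ _
        _ ≤ (({c} : Set α).encard + 1) + 1 := by gcongr; exact encard_insert_le _ _
        _ = 3 := by rw [encard_singleton]; norm_num
    have : I.encard < 2 + 1 := lt_of_lt_of_le hlt (hle.trans (by norm_num))
    exact ENat.lt_add_one_iff (by norm_num) |>.1 this
  · rw [← encard_pair hab]
    exact h2.encard_le_eRk_of_subset (by grind)

lemma eRk_triple_indep {α : Type*} (M : Matroid α) (a b c : α) (hab : a ≠ b) (hac : a ≠ c)
    (hbc : b ≠ c) (h : M.Indep {a, b, c}) : M.eRk {a, b, c} = 3 := by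
  rw [h.eRk_eq_encard, encard_eq_three]
  exact ⟨a, b, c, hab, hac, hbc, rfl⟩

lemma par_inj3 {K : Type*} [Field K] (e2 : (2 : K) ≠ 0)
    (e3 : (3 : K) ≠ 0) (e4 : (4 : K) ≠ 0) (e5 : (5 : K) ≠ 0) (e6 : (6 : K) ≠ 0) :
    Function.Injective (par (3 : K)) := by
  intro i j h
  fin_cases i <;> fin_cases j <;> simp [par] at h ⊢ <;> grind

lemma par_inj6 {K : Type*} [Field K] (e2 : (2 : K) ≠ 0)
    (e3 : (3 : K) ≠ 0) (e4 : (4 : K) ≠ 0) (e5 : (5 : K) ≠ 0) (e6 : (6 : K) ≠ 0) :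
    Function.Injective (par (6 : K)) := by
  intro i j h
  fin_cases i <;> fin_cases j <;> simp [par] at h ⊢ <;> grind

/-- Let `K` be a field whose characteristic is a prime `p ≥ 7`.  Then no host matroid `N`
admits an online matroid embedding of the class of all `K`-representable matroids. -/
theorem stmt13 (K : Type*) [Field K] (p : ℕ) (hp : p.Prime) (h7 : 7 ≤ p) [CharP K p]
    (β : Type*) (N : Matroid β) :
    ¬ OMEof (fun _ M => M.E = univ ∧ RepOver K M) N := by
  rintro ⟨f, -, hrk, hpre⟩
  have hn : ∀ n : ℕ, 0 < n → n < 7 → (n : K) ≠ 0 := fun n h0 hlt h => by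
    have := Nat.le_of_dvd h0 ((CharP.cast_eq_zero_iff K p n).1 h)
    omega
  have e1 : (1 : K) ≠ 0 := one_ne_zero
  have e2 : (2 : K) ≠ 0 := by exact_mod_cast hn 2 (by norm_num) (by norm_num)
  have e3 : (3 : K) ≠ 0 := by exact_mod_cast hn 3 (by norm_num) (by norm_num)
  have e4 : (4 : K) ≠ 0 := by exact_mod_cast hn 4 (by norm_num) (by norm_num)
  have e5 : (5 : K) ≠ 0 := by exact_mod_cast hn 5 (by norm_num) (by norm_num)
  have q : ∀ a b c : ℕ, (2 : K) ^ a * 3 ^ b * 5 ^ c ≠ 0 := fun a b c =>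
    mul_ne_zero (mul_ne_zero (pow_ne_zero _ e2) (pow_ne_zero _ e3)) (pow_ne_zero _ e5)
  have e6 : (6 : K) ≠ 0 := by exact_mod_cast hn 6 (by norm_num) (by norm_num)
  have i3 : Function.Injective (par (3 : K)) := par_inj3 e2 e3 e4 e5 e6
  have i6 : Function.Injective (par (6 : K)) := par_inj6 e2 e3 e4 e5 e6
  have hpeq : prefixMatroid (show 6 ≤ 7 by norm_num) (vecMatroid (vecs (3 : K))) =
      prefixMatroid (show 6 ≤ 7 by norm_num) (vecMatroid (vecs (6 : K))) := by
    refine Matroid.ext_indep (by simp [prefixMatroid, vecMatroid_ground]) fun I _ => ?_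
    rw [prefix_indep _ i3, prefix_indep _ i6]
  have hM : ∀ c : K, (vecMatroid (vecs c)).E = univ ∧ RepOver K (vecMatroid (vecs c)) :=
    fun c => ⟨rfl, vecMatroid_rep _⟩
  have hr : ∀ (c : K) (S : Set (Fin 7)),
      N.eRk (f 7 (vecMatroid (vecs c)) '' S) = (vecMatroid (vecs c)).eRk S := fun c S => by
    rw [← mRank_eq_eRk, ← mRank_eq_eRk]
    exact hrk 7 _ (hM c) S (subset_univ _)
  have hfe : ∀ i : Fin 6, f 7 (vecMatroid (vecs (6 : K))) (Fin.castLE (by norm_num) i) =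
      f 7 (vecMatroid (vecs (3 : K))) (Fin.castLE (by norm_num) i) := fun i => by
    rw [← hpre 6 7 (by norm_num) _ (hM 6), ← hpre 6 7 (by norm_num) _ (hM 3), hpeq]
  have hv6 : ∀ c : K, vecs c 6 = ![0, 1, 5] := fun c =>
    Fin.snoc_last (α := fun _ => Fin 3 → K) _ _
  have hvi : ∀ (c : K) (i : Fin 6), vecs c i.castSucc = fun j : Fin 3 => par c i ^ (j : ℕ) :=
    fun c i => Fin.snoc_castSucc (α := fun _ => Fin 3 → K) _ _ i
  have hv0 : ∀ c : K, vecs c 0 = _ := fun c => hvi c 0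
  have hv1 : ∀ c : K, vecs c 1 = _ := fun c => hvi c 1
  have hv2 : ∀ c : K, vecs c 2 = _ := fun c => hvi c 2
  have hv3 : ∀ c : K, vecs c 3 = _ := fun c => hvi c 3
  have hv4 : ∀ c : K, vecs c 4 = _ := fun c => hvi c 4
  have hv5 : ∀ c : K, vecs c 5 = _ := fun c => hvi c 5
  have ind : ∀ (c : K) (x y z : Fin 7), x ≠ y → x ≠ z → y ≠ z →
      ((vecMatroid (vecs c)).Indep {x, y, z} ↔
        (Matrix.of ![vecs c x, vecs c y, vecs c z]).det ≠ 0) := fun c x y z h1 h2 h3 =>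
    linearIndepOn_triple _ x y z h1 h2 h3
  have I012 : ∀ c : K, (vecMatroid (vecs c)).Indep {0, 1, 2} := fun c => by
    rw [ind c _ _ _ (by decide) (by decide) (by decide), hv0, hv1, hv2]
    intro h
    simp [Matrix.det_fin_three, par] at h
    exact q 2 0 1 (by first | linear_combination h | linear_combination -h)
  have I023 : ∀ c : K, (vecMatroid (vecs c)).Indep {2, 3, 0} := fun c => by
    rw [ind c _ _ _ (by decide) (by decide) (by decide), hv0, hv3, hv2]
    intro h
    simp [Matrix.det_fin_three, par] at h
    exact q 2 1 0 (by first | linear_combination h | linear_combination -h)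
  have I026 : (vecMatroid (vecs (3 : K))).Indep {0, 2, 6} := by
    rw [ind _ _ _ _ (by decide) (by decide) (by decide), hv0, hv6, hv2]
    intro h
    simp [Matrix.det_fin_three, par] at h
    exact q 2 0 0 (by first | linear_combination h | linear_combination -h)
  have I450 : (vecMatroid (vecs (3 : K))).Indep {4, 5, 0} := by
    rw [ind _ _ _ _ (by decide) (by decide) (by decide), hv0, hv4, hv5]
    intro h
    simp [Matrix.det_fin_three, par] at h
    exact q 1 1 0 (by first | linear_combination h | linear_combination -h)
  have I456 : (vecMatroid (vecs (6 : K))).Indep {4, 5, 6} := by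
    rw [ind _ _ _ _ (by decide) (by decide) (by decide), hv6, hv4, hv5]
    intro h
    simp [Matrix.det_fin_three, par] at h
    exact q 2 1 0 (by first | linear_combination h | linear_combination -h)
  have D456 : ¬ (vecMatroid (vecs (3 : K))).Indep {4, 5, 6} := by
    rw [ind _ _ _ _ (by decide) (by decide) (by decide), hv6, hv4, hv5]
    rw [not_not]
    simp [Matrix.det_fin_three, par]
    try ring
  have D016 : ∀ c : K, ¬ (vecMatroid (vecs c)).Indep {0, 1, 6} := fun c => by
    rw [ind _ _ _ _ (by decide) (by decide) (by decide), hv6, hv0, hv1]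
    rw [not_not]
    simp [Matrix.det_fin_three, par]
    try ring
  have D236 : ∀ c : K, ¬ (vecMatroid (vecs c)).Indep {2, 3, 6} := fun c => by
    rw [ind _ _ _ _ (by decide) (by decide) (by decide), hv6, hv2, hv3]
    rw [not_not]
    simp [Matrix.det_fin_three, par]
    try ring
  have P01 : ∀ c : K, (vecMatroid (vecs c)).Indep {0, 1} := fun c => (I012 c).subset (by grind)
  have P23 : ∀ c : K, (vecMatroid (vecs c)).Indep {2, 3} := fun c => (I023 c).subset (by grind)
  have P45 : (vecMatroid (vecs (3 : K))).Indep {4, 5} := I450.subset (by grind)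
  have P6 : (vecMatroid (vecs (3 : K))).Indep {6} := I026.subset (by grind)
  have f0 := hfe 0
  have f1 := hfe 1
  have f2 := hfe 2
  have f3 := hfe 3
  have f4 := hfe 4
  have f5 := hfe 5
  change f 7 _ 0 = f 7 _ 0 at f0
  change f 7 _ 1 = f 7 _ 1 at f1
  change f 7 _ 2 = f 7 _ 2 at f2
  change f 7 _ 3 = f 7 _ 3 at f3
  change f 7 _ 4 = f 7 _ 4 at f4
  change f 7 _ 5 = f 7 _ 5 at f5
  set g := f 7 (vecMatroid (vecs (3 : K))) with hg
  set g' := f 7 (vecMatroid (vecs (6 : K))) with hg'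
  have im2 : ∀ (h : Fin 7 → β) (x y : Fin 7), h '' {x, y} = {h x, h y} :=
    fun h x y => image_pair h x y
  have im3 : ∀ (h : Fin 7 → β) (x y z : Fin 7), h '' {x, y, z} = {h x, h y, h z} :=
    fun h x y z => by rw [image_insert_eq, image_pair]
  refine host_contra N (g 0) (g 1) (g 2) (g 3) (g 4) (g 5) (g 6) (g' 6)
    ?_ ?_ ?_ ?_ ?_ ?_ ?_ ?_ ?_ ?_
  · rw [← im2, hr, (P01 3).eRk_eq_encard, encard_pair (by decide)]
  · rw [← im3, hr]
    exact eRk_triple_dep _ _ _ _ (by decide) (P01 3) (D016 3)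
  · rw [← f0, ← f1, ← im3, hr]
    exact eRk_triple_dep _ _ _ _ (by decide) (P01 6) (D016 6)
  · rw [← im2, hr, (P23 3).eRk_eq_encard, encard_pair (by decide)]
  · rw [← im3, hr]
    exact eRk_triple_dep _ _ _ _ (by decide) (P23 3) (D236 3)
  · rw [← f2, ← f3, ← im3, hr]
    exact eRk_triple_dep _ _ _ _ (by decide) (P23 6) (D236 6)
  · rw [← im3, hr]
    exact eRk_triple_indep _ _ _ _ (by decide) (by decide) (by decide) (I012 3)
  · rw [← image_singleton, hr, P6.eRk_eq_encard, encard_singleton]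
  · rw [← im3, hr]
    exact eRk_triple_dep _ _ _ _ (by decide) P45 D456
  · rw [← f4, ← f5, ← im3, hr]
    exact eRk_triple_indep _ _ _ _ (by decide) (by decide) (by decide) I456
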